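/- arXiv:0810.3195 — 5 statements merged into one kernel-verified Lean document; each statement's English description precedes it below -/
import Mathlib

section
/- Let V be a real inner product space of finite dimension n ≥ 2, let p ∈ V be a nonzero vector, and set t = ‖p‖²/2. Let a₁, a₂, a₃, a₄, b₁, b₂, b₃, b₄ be real numbers and let J : V × V → V × V be the linear map J(X, θ) = (a₄X + b₄⟨p,X⟩p − a₂θ − b₂⟨p,θ⟩p, a₁X + b₁⟨p,X⟩p + a₃θ + b₃⟨p,θ⟩p). Then J ∘ J = −id (i.e. J is an almost complex structure on V × V) if and only if a₄ = −a₃, b₄ = −b₃, a₁a₂ = 1 + a₃², and (a₁ + 2tb₁)(a₂ + 2tb₂) = 1 + (a₃ + 2tb₃)². -/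
open scoped RealInnerProductSpace

/-!
On `V × V`, viewed as `ℝ² ⊗ V`, the map `J` is `A ⊗ id + B ⊗ f` with `2 × 2` matrices `A`, `B` and
the rank-one map `f = ⟪p, ·⟫ p`, which satisfies `f² = τ f` for `τ = ⟪p, p⟫ = 2t`. Hence
`J² = A² ⊗ id + (AB + BA + τB²) ⊗ f`. As `id` and `f` are linearly independent and
`(A + τB)² = A² + τ(AB + BA + τB²)`, `J² = -id` says that both `A` (the action of `J` on `p^⊥`) and
`A + τB` (its action on the line of `p`) square to `-1`. By Cayley-Hamilton, a `2 × 2` matrix over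
a domain without a square root of `-1` squares to `-1` exactly when its trace is `0` and its
determinant is `1`.
-/

open scoped Matrix.Module

section NaturalTensor

variable {ι R V : Type*} [Fintype ι] [DecidableEq ι] [CommRing R] [AddCommGroup V] [Module R V]

/-- The map `A ⊗ id + B ⊗ f` on `ι → V`, viewed as the tensor product of `ι → R` with `V`. For
`ι = Fin 2` and `f = ⟪p, ·⟫ p` these are the natural tensors at a point `p` of the cotangent
bundle, the indices `0` and `1` standing for the horizontal and the vertical component. -/
def naturalTensor (f : Module.End R V) (A B : Matrix ι ι R) (ξ : ι → V) : ι → V :=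
  A • ξ + B • f.mapMatrixModule ι ξ

lemma smulRight_mul_self (φ : Module.Dual R V) (p : V) :
    (φ.smulRight p * φ.smulRight p : Module.End R V) = φ p • φ.smulRight p := by
  ext x
  simp [smul_smul, mul_comm]

lemma naturalTensor_naturalTensor {f : Module.End R V} {τ : R} (hf : f * f = τ • f)
    (A B : Matrix ι ι R) (ξ : ι → V) :
    naturalTensor f A B (naturalTensor f A B ξ) =
      naturalTensor f (A * A) (A * B + B * A + τ • (B * B)) ξ := by
  have hf' : f.mapMatrixModule ι (f.mapMatrixModule ι ξ) = τ • f.mapMatrixModule ι ξ :=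
    funext fun i ↦ LinearMap.congr_fun hf (ξ i)
  simp only [naturalTensor, map_add, map_smul, hf', smul_add, add_smul, mul_smul, smul_assoc,
    smul_comm _ τ]
  abel

lemma naturalTensor_smulRight_fin_two (φ : Module.Dual R V) (p X θ : V)
    (a₁ a₂ a₃ a₄ b₁ b₂ b₃ b₄ : R) :
    naturalTensor (φ.smulRight p) !![a₄, -a₂; a₁, a₃] !![b₄, -b₂; b₁, b₃] ![X, θ] =
      ![a₄ • X + (b₄ * φ X) • p - a₂ • θ - (b₂ * φ θ) • p,
        a₁ • X + (b₁ * φ X) • p + a₃ • θ + (b₃ * φ θ) • p] := by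
  ext i
  fin_cases i <;> simp [naturalTensor, smul_smul, sub_eq_add_neg, add_assoc, add_left_comm]

variable [IsDomain R] [Module.IsTorsionFree R V]

lemma matrix_ext_of_smul_single {v : V} (hv : v ≠ 0) {M N : Matrix ι ι R}
    (h : ∀ j, M • (Pi.single j v : ι → V) = N • (Pi.single j v : ι → V)) : M = N := by
  ext i j
  have hij : M i j • v = N i j • v := by
    simpa [Pi.single_apply] using congrFun (h j) i
  exact smul_left_injective R hv hij

lemma naturalTensor_inj {f : Module.End R V} (hf : f ≠ 0) (hker : LinearMap.ker f ≠ ⊥)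
    {A B A' B' : Matrix ι ι R} :
    naturalTensor f A B = naturalTensor f A' B' ↔ A = A' ∧ B = B' := by
  refine ⟨fun h ↦ ?_, fun ⟨hA, hB⟩ ↦ by rw [hA, hB]⟩
  have map_single (j : ι) (v : V) :
      f.mapMatrixModule ι (Pi.single j v) = Pi.single j (f v) := by
    ext i
    simp [Pi.single_apply, apply_ite f]
  obtain ⟨u, hu, hu0⟩ := Submodule.exists_mem_ne_zero_of_ne_bot hker
  obtain ⟨v, hv⟩ := DFunLike.ne_iff.mp hf
  obtain rfl : A = A' := matrix_ext_of_smul_single hu0 fun j ↦ by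
    simpa [naturalTensor, map_single, LinearMap.mem_ker.mp hu] using congrFun h (Pi.single j u)
  refine ⟨rfl, matrix_ext_of_smul_single hv fun j ↦ ?_⟩
  simpa only [naturalTensor, map_single, add_right_inj] using congrFun h (Pi.single j v)

theorem naturalTensor_naturalTensor_eq_neg_iff {f : Module.End R V} {τ : R} (hτ : τ ≠ 0)
    (hf : f * f = τ • f) (hf0 : f ≠ 0) (hker : LinearMap.ker f ≠ ⊥) {A B : Matrix ι ι R} :
    (∀ ξ, naturalTensor f A B (naturalTensor f A B ξ) = -ξ) ↔
      A * A = -1 ∧ (A + τ • B) * (A + τ • B) = -1 := by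
  have hneg (ξ : ι → V) : -ξ = naturalTensor f (-1 : Matrix ι ι R) 0 ξ := by
    simp [naturalTensor]
  have hsq : (A + τ • B) * (A + τ • B) = A * A + τ • (A * B + B * A + τ • (B * B)) := by
    simp only [add_mul, mul_add, smul_mul_assoc, mul_smul_comm, smul_add]
    abel
  simp only [naturalTensor_naturalTensor hf, hneg, ← funext_iff, naturalTensor_inj hf0 hker, hsq]
  refine and_congr_right fun hA ↦ ?_
  rw [hA, add_eq_left, smul_eq_zero_iff_right hτ]

end NaturalTensor

section FinTwo

variable {R : Type*} [CommRing R]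

lemma fin_two_mul_self_eq_trace_smul_sub_det_smul (M : Matrix (Fin 2) (Fin 2) R) :
    M * M = M.trace • M - M.det • 1 := by
  nontriviality R
  have h := M.aeval_self_charpoly
  rw [Matrix.charpoly_fin_two] at h
  simp only [map_add, map_sub, map_mul, Polynomial.aeval_X, Polynomial.aeval_C, sq,
    Algebra.algebraMap_eq_smul_one, smul_mul_assoc, one_mul] at h
  linear_combination (norm := module) h

variable [NoZeroDivisors R]

theorem fin_two_mul_self_eq_neg_one_iff (hR : ¬IsSquare (-1 : R)) {M : Matrix (Fin 2) (Fin 2) R} :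
    M * M = -1 ↔ M.trace = 0 ∧ M.det = 1 := by
  refine ⟨fun h ↦ ?_, fun ⟨htr, hdet⟩ ↦ by
    simp [fin_two_mul_self_eq_trace_smul_sub_det_smul, htr, hdet]⟩
  have hscalar : M.trace • M = (M.det - 1) • 1 := by
    rw [fin_two_mul_self_eq_trace_smul_sub_det_smul] at h
    linear_combination (norm := module) h
  have htr : M.trace = 0 := by
    by_contra htr
    have h01 : M 0 1 = 0 := by simpa [htr] using congrFun₂ hscalar 0 1
    have h00 : M 0 0 * M 0 0 = -1 := by
      simpa [Matrix.mul_apply, Fin.sum_univ_two, h01] using congrFun₂ h 0 0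
    exact hR ⟨M 0 0, h00.symm⟩
  have hdet : M.det - 1 = 0 := by simpa [htr] using (congrFun₂ hscalar 0 0).symm
  exact ⟨htr, sub_eq_zero.mp hdet⟩

lemma fin_two_of_mul_self_eq_neg_one_iff (hR : ¬IsSquare (-1 : R)) {a b c d : R} :
    !![d, -b; a, c] * !![d, -b; a, c] = -1 ↔ d = -c ∧ a * b = 1 + c ^ 2 := by
  rw [fin_two_mul_self_eq_neg_one_iff hR, Matrix.trace_fin_two_of, Matrix.det_fin_two_of,
    add_eq_zero_iff_eq_neg]
  refine and_congr_right fun hd ↦ ?_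
  subst hd
  constructor <;> intro h <;> linear_combination h

lemma fin_two_pencil_mul_self_eq_neg_one_iff (hR : ¬IsSquare (-1 : R)) {τ : R} (hτ : τ ≠ 0)
    {a₁ a₂ a₃ a₄ b₁ b₂ b₃ b₄ : R} {A B : Matrix (Fin 2) (Fin 2) R}
    (hA : A = !![a₄, -a₂; a₁, a₃]) (hB : B = !![b₄, -b₂; b₁, b₃]) :
    A * A = -1 ∧ (A + τ • B) * (A + τ • B) = -1 ↔
      a₄ = -a₃ ∧ b₄ = -b₃ ∧ a₁ * a₂ = 1 + a₃ ^ 2 ∧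
        (a₁ + τ * b₁) * (a₂ + τ * b₂) = 1 + (a₃ + τ * b₃) ^ 2 := by
  have hAB : A + τ • B = !![a₄ + τ * b₄, -(a₂ + τ * b₂); a₁ + τ * b₁, a₃ + τ * b₃] := by
    simp [hA, hB, add_comm]
  rw [hAB, hA, fin_two_of_mul_self_eq_neg_one_iff hR, fin_two_of_mul_self_eq_neg_one_iff hR,
    and_assoc]
  refine and_congr_right fun ha ↦ ?_
  have hb : a₄ + τ * b₄ = -(a₃ + τ * b₃) ↔ b₄ = -b₃ := by
    rw [ha, neg_add, add_right_inj, ← mul_neg, mul_right_inj' hτ]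
  rw [hb, and_left_comm]

end FinTwo

theorem almost_complex_iff_coeff_relations_general
    {R V : Type*} [CommRing R] [IsDomain R] (hR : ¬IsSquare (-1 : R))
    [AddCommGroup V] [Module R V] [Module.IsTorsionFree R V]
    (φ : Module.Dual R V) (hker : LinearMap.ker φ ≠ ⊥) (p : V) (hp : φ p ≠ 0)
    (a₁ a₂ a₃ a₄ b₁ b₂ b₃ b₄ : R) (J : V × V → V × V)
    (hJ : ∀ X θ : V, J (X, θ) =
      (a₄ • X + (b₄ * φ X) • p - a₂ • θ - (b₂ * φ θ) • p,
       a₁ • X + (b₁ * φ X) • p + a₃ • θ + (b₃ * φ θ) • p)) :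
    (∀ ξ : V × V, J (J ξ) = -ξ) ↔
      (a₄ = -a₃ ∧ b₄ = -b₃ ∧ a₁ * a₂ = 1 + a₃ ^ 2 ∧
        (a₁ + φ p * b₁) * (a₂ + φ p * b₂) = 1 + (a₃ + φ p * b₃) ^ 2) := by
  let f : Module.End R V := φ.smulRight p
  let A := !![a₄, -a₂; a₁, a₃]
  let B := !![b₄, -b₂; b₁, b₃]
  let e := LinearEquiv.finTwoArrow R V
  have hJe (ξ : V × V) : J ξ = e (naturalTensor f A B (e.symm ξ)) := by
    change J (ξ.1, ξ.2) = e (naturalTensor f A B ![ξ.1, ξ.2])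
    rw [hJ, naturalTensor_smulRight_fin_two]
    rfl
  have hJJ : (∀ ξ, J (J ξ) = -ξ) ↔ ∀ ξ, naturalTensor f A B (naturalTensor f A B ξ) = -ξ := by
    simp only [e.surjective.forall, hJe, e.symm_apply_apply, ← map_neg, e.injective.eq_iff]
  have hp0 : p ≠ 0 := fun h ↦ hp (by rw [h, map_zero])
  have hf0 : f ≠ 0 := DFunLike.ne_iff.mpr ⟨p, by simp [f, hp, hp0]⟩
  have hkerf : LinearMap.ker f = LinearMap.ker φ := by
    ext
    simp [f, hp0]
  rw [hJJ, naturalTensor_naturalTensor_eq_neg_iff hp (smulRight_mul_self φ p) hf0 (hkerf ▸ hker),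
    fin_two_pencil_mul_self_eq_neg_one_iff hR hp rfl rfl]

/-- Fibrewise form of Theorem 2.1: the general natural tensor `J` on the fibre
`V × V` (horizontal ⊕ vertical) squares to `-id` iff `a₄ = -a₃`, `b₄ = -b₃`,
`a₁a₂ = 1 + a₃²` and `(a₁ + 2tb₁)(a₂ + 2tb₂) = 1 + (a₃ + 2tb₃)²`. -/
theorem almost_complex_iff_coeff_relations
    {V : Type*} [NormedAddCommGroup V] [InnerProductSpace ℝ V]
    [FiniteDimensional ℝ V] (hn : 2 ≤ Module.finrank ℝ V)
    (p : V) (hp : p ≠ 0)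
    (a₁ a₂ a₃ a₄ b₁ b₂ b₃ b₄ t : ℝ) (ht : t = ‖p‖ ^ 2 / 2)
    (J : V × V → V × V)
    (hJ : ∀ X θ : V, J (X, θ) =
      (a₄ • X + (b₄ * ⟪p, X⟫) • p - a₂ • θ - (b₂ * ⟪p, θ⟫) • p,
       a₁ • X + (b₁ * ⟪p, X⟫) • p + a₃ • θ + (b₃ * ⟪p, θ⟫) • p)) :
    (∀ ξ : V × V, J (J ξ) = -ξ) ↔
      (a₄ = -a₃ ∧ b₄ = -b₃ ∧ a₁ * a₂ = 1 + a₃ ^ 2 ∧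
        (a₁ + 2 * t * b₁) * (a₂ + 2 * t * b₂) = 1 + (a₃ + 2 * t * b₃) ^ 2) := by
  rw [show 2 * t = ⟪p, p⟫ by rw [ht, real_inner_self_eq_norm_sq]; ring]
  exact almost_complex_iff_coeff_relations_general (fun h ↦ by linarith [h.nonneg]) (innerₗ V p)
    (LinearMap.ker_ne_bot_of_finrank_lt (by rwa [Module.finrank_self])) p
    (inner_self_ne_zero.mpr hp) a₁ a₂ a₃ a₄ b₁ b₂ b₃ b₄ J hJ
end

section
/- Let V be a real inner product space of finite dimension n ≥ 2, let p ∈ V be a nonzero vector, and set t = ‖p‖²/2. Let a₁, a₂, a₃, b₁, b₂, b₃ be real numbers satisfying a₁a₂ = 1 + a₃² and (a₁ + 2tb₁)(a₂ + 2tb₂) = 1 + (a₃ + 2tb₃)², and let J : V × V → V × V be given by J(X, θ) = (−a₃X − b₃⟨p,X⟩p − a₂θ − b₂⟨p,θ⟩p, a₁X + b₁⟨p,X⟩p + a₃θ + b₃⟨p,θ⟩p). Let c₁, c₂, c₃, d₁, d₂, d₃ be real numbers and let G be the symmetric bilinear form on V × V given by G((X,θ),(Y,ω)) = c₁⟨X,Y⟩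 + d₁⟨p,X⟩⟨p,Y⟩ + c₂⟨θ,ω⟩ + d₂⟨p,θ⟩⟨p,ω⟩ + c₃(⟨X,ω⟩ + ⟨θ,Y⟩) + d₃(⟨p,X⟩⟨p,ω⟩ + ⟨p,θ⟩⟨p,Y⟩). Then G(Jξ, Jη) = G(ξ, η) for all ξ, η ∈ V × V if and only if there exist real numbers λ and μ such that c₁ = λa₁, c₂ = λa₂, c₃ = λa₃, c₁ + 2td₁ = (λ + 2tμ)(a₁ + 2tb₁), c₂ + 2td₂ = (λ + 2tμ)(a₂ + 2tb₂), and c₃ + 2td₃ = (λ + 2tμ)(a₃ + 2tb₃). -/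
open scoped RealInnerProductSpace

/-!
Write each coefficient pair `(a, b)` as the operator `X ↦ a X + b ⟪p, X⟫ p`, whose eigenvalues are
`a` on `pᗮ` and `a + 2tb` on `ℝ p`. These operators are symmetric and form a commutative algebra,
in which both hypotheses on `J` together say `S₁ S₂ = 1 + S₃ ^ 2`, that is, `J² = -1`. Hence `G` is
`J`-invariant iff `J` is `G`-skew, a condition linear in `J`, which says that the coefficient
triples `(T₁, T₂, T₃)` of `G` and `(S₁, S₂, S₃)` of `J` have vanishing cross product. Because
`S₁ S₂ - S₃ ^ 2 = 1`, this forces `Tᵢ = L Sᵢ` with `L = T₁ S₂ - T₃ S₃`, and the two eigenvalues of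
`L` are `λ` and `λ + 2tμ`.
-/

theorem exists_eq_mul_iff_cross_mul_eq {R : Type*} [CommRing R] {s₁ s₂ s₃ t₁ t₂ t₃ : R}
    (hs : s₁ * s₂ = 1 + s₃ ^ 2) :
    (∃ l, t₁ = l * s₁ ∧ t₂ = l * s₂ ∧ t₃ = l * s₃) ↔
      t₃ * s₁ = t₁ * s₃ ∧ t₂ * s₃ = t₃ * s₂ ∧ t₂ * s₁ = t₁ * s₂ := by
  constructor
  · rintro ⟨l, rfl, rfl, rfl⟩
    exact ⟨by ring, by ring, by ring⟩
  · rintro ⟨h₃₁, h₂₃, h₂₁⟩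
    refine ⟨t₁ * s₂ - t₃ * s₃, ?_, ?_, ?_⟩
    · linear_combination s₃ * h₃₁ - t₁ * hs
    · linear_combination s₂ * h₂₁ - s₃ * h₂₃ - t₂ * hs
    · linear_combination s₂ * h₃₁ - t₃ * hs

theorem apply_map_map_eq_iff_isSkewAdjoint {R M : Type*} [CommRing R] [AddCommGroup M] [Module R M]
    {B : LinearMap.BilinForm R M} {J : Module.End R M} (hJ : J * J = -1) :
    (∀ ξ η, B (J ξ) (J η) = B ξ η) ↔ B.IsSkewAdjoint J := by
  have hJJ : ∀ ξ, J (J ξ) = -ξ := fun ξ => by simpa using LinearMap.congr_fun hJ ξ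
  constructor
  · intro h ξ η
    simpa [hJJ] using (h (J ξ) η).symm
  · intro h ξ η
    simpa [hJJ] using h ξ (J η)

section Block

variable {V A : Type*} [NormedAddCommGroup V] [InnerProductSpace ℝ V] [CommRing A]
  (r : A →+* Module.End ℝ V) (s₁ s₂ s₃ t₁ t₂ t₃ : A)

/-- The endomorphism of `V × V` (horizontal and vertical parts) with blocks `-s₃, -s₂; s₁, s₃`,
the shape of a general natural almost complex structure. The blocks are elements of a commutative
ring `A` acting on `V` through `r`. -/
def naturalEnd : Module.End ℝ (V × V) :=
  ((-r s₃).coprod (-r s₂)).prod ((r s₁).coprod (r s₃))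

/-- The bilinear form on `V × V` whose Gram operator has blocks `t₁, t₃; t₃, t₂`, the shape of a
general natural lifted metric. -/
noncomputable def naturalForm : LinearMap.BilinForm ℝ (V × V) :=
  (innerₗ V).compl₁₂ ((r t₁).coprod (r t₃)) (LinearMap.fst ℝ V V) +
    (innerₗ V).compl₁₂ ((r t₃).coprod (r t₂)) (LinearMap.snd ℝ V V)

theorem naturalEnd_apply (ξ : V × V) :
    naturalEnd r s₁ s₂ s₃ ξ = (-(r s₃ ξ.1) - r s₂ ξ.2, r s₁ ξ.1 + r s₃ ξ.2) := by
  simp [naturalEnd, sub_eq_add_neg]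

theorem naturalForm_apply (ξ η : V × V) :
    naturalForm r t₁ t₂ t₃ ξ η =
      ⟪r t₁ ξ.1 + r t₃ ξ.2, η.1⟫ + ⟪r t₃ ξ.1 + r t₂ ξ.2, η.2⟫ := by
  simp [naturalForm, inner_add_left]

variable {r s₁ s₂ s₃ t₁ t₂ t₃}

theorem naturalEnd_mul_self (hs : s₁ * s₂ = 1 + s₃ ^ 2) :
    naturalEnd r s₁ s₂ s₃ * naturalEnd r s₁ s₂ s₃ = -1 := by
  have hcomm (a b : A) (X : V) : r a (r b X) = r b (r a X) := by
    rw [← Module.End.mul_apply, ← map_mul, mul_comm, map_mul, Module.End.mul_apply]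
  have hr (X : V) : r s₁ (r s₂ X) = X + r s₃ (r s₃ X) := by
    simpa [pow_two] using LinearMap.congr_fun (congrArg r hs) X
  refine LinearMap.ext fun ξ => ?_
  ext <;> simp [naturalEnd_apply, hcomm s₂, hcomm s₃ s₁, hr] <;> abel

theorem naturalForm_eq_zero_iff (hr : Function.Injective r) :
    naturalForm r t₁ t₂ t₃ = 0 ↔ t₁ = 0 ∧ t₂ = 0 ∧ t₃ = 0 := by
  constructor
  · intro h
    have hzero (ξ η : V × V) : ⟪r t₁ ξ.1 + r t₃ ξ.2, η.1⟫ + ⟪r t₃ ξ.1 + r t₂ ξ.2, η.2⟫ = 0 := by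
      rw [← naturalForm_apply, h, LinearMap.zero_apply, LinearMap.zero_apply]
    have eq_zero_of_inner {a : A} (ha : ∀ X Y, ⟪r a X, Y⟫ = 0) : a = 0 :=
      (map_eq_zero_iff r hr).mp <| LinearMap.ext fun X => inner_self_eq_zero.mp (ha X (r a X))
    exact ⟨eq_zero_of_inner fun X Y => by simpa using hzero (X, 0) (Y, 0),
      eq_zero_of_inner fun X Y => by simpa using hzero (0, X) (0, Y),
      eq_zero_of_inner fun X Y => by simpa using hzero (X, 0) (0, Y)⟩
  · rintro ⟨rfl, rfl, rfl⟩
    refine LinearMap.ext₂ fun ξ η => ?_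
    simp [naturalForm_apply]

theorem naturalForm_naturalEnd_add (hsymm : ∀ a, (r a).IsSymmetric) (ξ η : V × V) :
    naturalForm r t₁ t₂ t₃ (naturalEnd r s₁ s₂ s₃ ξ) η +
        naturalForm r t₁ t₂ t₃ ξ (naturalEnd r s₁ s₂ s₃ η) =
      naturalForm r (2 * (t₃ * s₁ - t₁ * s₃)) (2 * (t₂ * s₃ - t₃ * s₂)) (t₂ * s₁ - t₁ * s₂)
        ξ η := by
  have hmove (a b : A) (X Y : V) : ⟪r a X, r b Y⟫ = ⟪r (a * b) X, Y⟫ := by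
    rw [mul_comm, map_mul, Module.End.mul_apply, hsymm b]
  simp only [naturalForm_apply, naturalEnd_apply, map_add, map_sub, map_neg, two_mul,
    inner_add_left, inner_add_right, inner_sub_left, inner_sub_right, inner_neg_left,
    inner_neg_right, LinearMap.add_apply, LinearMap.sub_apply, hmove,
    ← Module.End.mul_apply, ← map_mul]
  ring

theorem isSkewAdjoint_naturalForm_naturalEnd_iff (hr : Function.Injective r)
    (hsymm : ∀ a, (r a).IsSymmetric) :
    (naturalForm r t₁ t₂ t₃).IsSkewAdjoint (naturalEnd r s₁ s₂ s₃) ↔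
      t₃ * s₁ = t₁ * s₃ ∧ t₂ * s₃ = t₃ * s₂ ∧ t₂ * s₁ = t₁ * s₂ := by
  have two_mul_eq_zero {a : A} : 2 * a = 0 ↔ a = 0 := by
    rw [← map_eq_zero_iff r hr, two_mul, map_add, ← two_smul ℝ,
      smul_eq_zero_iff_right (two_ne_zero' ℝ), map_eq_zero_iff r hr]
  calc (naturalForm r t₁ t₂ t₃).IsSkewAdjoint (naturalEnd r s₁ s₂ s₃)
    _ ↔ ∀ ξ η, naturalForm r t₁ t₂ t₃ (naturalEnd r s₁ s₂ s₃ ξ) η +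
          naturalForm r t₁ t₂ t₃ ξ (naturalEnd r s₁ s₂ s₃ η) = 0 := by
      simp only [LinearMap.IsSkewAdjoint, LinearMap.IsAdjointPair, Pi.neg_apply, map_neg,
        eq_neg_iff_add_eq_zero]
    _ ↔ naturalForm r (2 * (t₃ * s₁ - t₁ * s₃)) (2 * (t₂ * s₃ - t₃ * s₂))
          (t₂ * s₁ - t₁ * s₂) = 0 := by
      simp only [naturalForm_naturalEnd_add hsymm, LinearMap.ext_iff₂, LinearMap.zero_apply]
    _ ↔ t₃ * s₁ = t₁ * s₃ ∧ t₂ * s₃ = t₃ * s₂ ∧ t₂ * s₁ = t₁ * s₂ := by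
      simp only [naturalForm_eq_zero_iff hr, two_mul_eq_zero, sub_eq_zero]

theorem naturalForm_invariant_iff_exists_eq_mul (hr : Function.Injective r)
    (hsymm : ∀ a, (r a).IsSymmetric) (hs : s₁ * s₂ = 1 + s₃ ^ 2) :
    (∀ ξ η, naturalForm r t₁ t₂ t₃ (naturalEnd r s₁ s₂ s₃ ξ) (naturalEnd r s₁ s₂ s₃ η) =
        naturalForm r t₁ t₂ t₃ ξ η) ↔
      ∃ l, t₁ = l * s₁ ∧ t₂ = l * s₂ ∧ t₃ = l * s₃ := by
  rw [apply_map_map_eq_iff_isSkewAdjoint (naturalEnd_mul_self hs),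
    isSkewAdjoint_naturalForm_naturalEnd_iff hr hsymm, exists_eq_mul_iff_cross_mul_eq hs]

end Block

section AxialValue

variable {R : Type*} [CommRing R]

/-- The character `a + b ω ↦ a + s b` of the algebra `R[ω] / (ω² - s ω)`. For the operator
`a + b ⟪p, ·⟫ p` with `s = ‖p‖²`, it is the eigenvalue on `p`; the other character
`QuadraticAlgebra.re` is the eigenvalue on `pᗮ`. -/
def axialValue (s : R) : QuadraticAlgebra R 0 s →ₐ[R] R :=
  QuadraticAlgebra.lift ⟨s, by simp⟩

theorem axialValue_apply (s : R) (z : QuadraticAlgebra R 0 s) :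
    axialValue s z = z.re + s * z.im := by
  simp [axialValue, mul_comm]

theorem eq_iff_re_eq_and_axialValue_eq [NoZeroDivisors R] {s : R} (hs : s ≠ 0)
    {z w : QuadraticAlgebra R 0 s} :
    z = w ↔ z.re = w.re ∧ axialValue s z = axialValue s w := by
  simp +contextual [QuadraticAlgebra.ext_iff, axialValue_apply, hs]

theorem exists_eq_mul_iff_re_and_axialValue [NoZeroDivisors R] {s : R} (hs : s ≠ 0)
    (z₁ z₂ z₃ w₁ w₂ w₃ : QuadraticAlgebra R 0 s) :
    (∃ l, z₁ = l * w₁ ∧ z₂ = l * w₂ ∧ z₃ = l * w₃) ↔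
      ∃ a b : R, z₁.re = a * w₁.re ∧ z₂.re = a * w₂.re ∧ z₃.re = a * w₃.re ∧
        axialValue s z₁ = (a + s * b) * axialValue s w₁ ∧
        axialValue s z₂ = (a + s * b) * axialValue s w₂ ∧
        axialValue s z₃ = (a + s * b) * axialValue s w₃ := by
  have eq_mul_iff (l z w : QuadraticAlgebra R 0 s) :
      z = l * w ↔ z.re = l.re * w.re ∧ axialValue s z = (l.re + s * l.im) * axialValue s w := by
    rw [eq_iff_re_eq_and_axialValue_eq hs, map_mul, axialValue_apply s l]
    simp
  simp only [eq_mul_iff, (QuadraticAlgebra.equivProd 0 s).exists_congr_left, Prod.exists]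
  exact exists₂_congr fun a b => by simp only [QuadraticAlgebra.equivProd_symm_apply]; tauto

end AxialValue

section Radial

variable {V : Type*} [NormedAddCommGroup V] [InnerProductSpace ℝ V]

/-- The representation of `ℝ[ω] / (ω² - ‖p‖² ω)` on `V` in which `a + b ω` acts as
`X ↦ a X + b ⟪p, X⟫ p`; it encodes the coefficient pairs `(aᵢ, bᵢ)` and `(cᵢ, dᵢ)`. -/
noncomputable def radialEnd (p : V) : QuadraticAlgebra ℝ 0 (‖p‖ ^ 2) →+* Module.End ℝ V :=
  (QuadraticAlgebra.lift ⟨(innerₗ V p).smulRight p, by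
    ext X
    simp [smul_smul, mul_comm]⟩).toRingHom

theorem radialEnd_apply (p : V) (z : QuadraticAlgebra ℝ 0 (‖p‖ ^ 2)) (X : V) :
    radialEnd p z X = z.re • X + (z.im * ⟪p, X⟫) • p := by
  simp [radialEnd, mul_smul]

theorem radialEnd_isSymmetric (p : V) (z : QuadraticAlgebra ℝ 0 (‖p‖ ^ 2)) :
    (radialEnd p z).IsSymmetric := by
  intro X Y
  simp only [radialEnd_apply, inner_add_left, inner_add_right, real_inner_smul_left,
    real_inner_smul_right, real_inner_comm p X]
  ring

theorem radialEnd_injective (hV : 1 < Module.rank ℝ V) {p : V} (hp : p ≠ 0) :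
    Function.Injective (radialEnd p) := by
  refine (injective_iff_map_eq_zero _).mpr fun z hz => ?_
  have hz_apply (X : V) : z.re • X + (z.im * ⟪p, X⟫) • p = 0 := by
    rw [← radialEnd_apply, hz, LinearMap.zero_apply]
  obtain ⟨q, hpq⟩ := exists_linearIndependent_pair_of_one_lt_rank hV hp
  have hre : z.re = 0 :=
    (LinearIndependent.pair_iff.mp hpq _ _ ((add_comm _ _).trans (hz_apply q))).2
  have him : z.im = 0 := by simpa [hre, hp] using hz_apply p
  exact QuadraticAlgebra.ext hre him

theorem naturalEnd_radialEnd_apply (p : V) (z₁ z₂ z₃ : QuadraticAlgebra ℝ 0 (‖p‖ ^ 2)) (X θ : V) :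
    naturalEnd (radialEnd p) z₁ z₂ z₃ (X, θ) =
      (-(z₃.re • X) - (z₃.im * ⟪p, X⟫) • p - z₂.re • θ - (z₂.im * ⟪p, θ⟫) • p,
       z₁.re • X + (z₁.im * ⟪p, X⟫) • p + z₃.re • θ + (z₃.im * ⟪p, θ⟫) • p) := by
  ext <;> simp only [naturalEnd_apply, radialEnd_apply] <;> abel

theorem naturalForm_radialEnd_apply (p : V) (z₁ z₂ z₃ : QuadraticAlgebra ℝ 0 (‖p‖ ^ 2))
    (X θ Y ω : V) :
    naturalForm (radialEnd p) z₁ z₂ z₃ (X, θ) (Y, ω) =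
      z₁.re * ⟪X, Y⟫ + z₁.im * (⟪p, X⟫ * ⟪p, Y⟫) + z₂.re * ⟪θ, ω⟫ +
        z₂.im * (⟪p, θ⟫ * ⟪p, ω⟫) + z₃.re * (⟪X, ω⟫ + ⟪θ, Y⟫) +
        z₃.im * (⟪p, X⟫ * ⟪p, ω⟫ + ⟪p, θ⟫ * ⟪p, Y⟫) := by
  simp only [naturalForm_apply, radialEnd_apply, inner_add_left, real_inner_smul_left]
  ring

end Radial

theorem almost_hermitian_iff_proportionality_general
    {V : Type*} [NormedAddCommGroup V] [InnerProductSpace ℝ V]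
    (hV : 1 < Module.rank ℝ V)
    (p : V) (hp : p ≠ 0)
    (a₁ a₂ a₃ b₁ b₂ b₃ t : ℝ) (ht : t = ‖p‖ ^ 2 / 2)
    (h1 : a₁ * a₂ = 1 + a₃ ^ 2)
    (h2 : (a₁ + 2 * t * b₁) * (a₂ + 2 * t * b₂) = 1 + (a₃ + 2 * t * b₃) ^ 2)
    (J : V × V → V × V)
    (hJ : ∀ X θ : V, J (X, θ) =
      (-(a₃ • X) - (b₃ * ⟪p, X⟫) • p - a₂ • θ - (b₂ * ⟪p, θ⟫) • p,
       a₁ • X + (b₁ * ⟪p, X⟫) • p + a₃ • θ + (b₃ * ⟪p, θ⟫) • p))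
    (c₁ c₂ c₃ d₁ d₂ d₃ : ℝ)
    (G : V × V → V × V → ℝ)
    (hG : ∀ X θ Y ω : V, G (X, θ) (Y, ω) =
      c₁ * ⟪X, Y⟫ + d₁ * (⟪p, X⟫ * ⟪p, Y⟫) + c₂ * ⟪θ, ω⟫ +
        d₂ * (⟪p, θ⟫ * ⟪p, ω⟫) + c₃ * (⟪X, ω⟫ + ⟪θ, Y⟫) +
        d₃ * (⟪p, X⟫ * ⟪p, ω⟫ + ⟪p, θ⟫ * ⟪p, Y⟫)) :
    (∀ ξ η : V × V, G (J ξ) (J η) = G ξ η) ↔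
      ∃ lam mu : ℝ,
        c₁ = lam * a₁ ∧ c₂ = lam * a₂ ∧ c₃ = lam * a₃ ∧
        c₁ + 2 * t * d₁ = (lam + 2 * t * mu) * (a₁ + 2 * t * b₁) ∧
        c₂ + 2 * t * d₂ = (lam + 2 * t * mu) * (a₂ + 2 * t * b₂) ∧
        c₃ + 2 * t * d₃ = (lam + 2 * t * mu) * (a₃ + 2 * t * b₃) := by
  have hs : 2 * t = ‖p‖ ^ 2 := by rw [ht]; ring
  have hs_ne : ‖p‖ ^ 2 ≠ 0 := pow_ne_zero 2 (norm_ne_zero_iff.mpr hp)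
  rw [hs] at h2 ⊢
  let S₁ : QuadraticAlgebra ℝ 0 (‖p‖ ^ 2) := ⟨a₁, b₁⟩
  let S₂ : QuadraticAlgebra ℝ 0 (‖p‖ ^ 2) := ⟨a₂, b₂⟩
  let S₃ : QuadraticAlgebra ℝ 0 (‖p‖ ^ 2) := ⟨a₃, b₃⟩
  have hS : S₁ * S₂ = 1 + S₃ ^ 2 := by
    refine (eq_iff_re_eq_and_axialValue_eq hs_ne).mpr ⟨?_, ?_⟩
    · simpa [S₁, S₂, S₃, QuadraticAlgebra.re_one, pow_two] using h1
    · simpa only [map_mul, map_add, map_one, map_pow, axialValue_apply] using h2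
  have hJ_eq : J = naturalEnd (radialEnd p) S₁ S₂ S₃ :=
    funext fun ⟨X, θ⟩ => by rw [hJ, naturalEnd_radialEnd_apply]
  have hG_eq (ξ η : V × V) :
      G ξ η = naturalForm (radialEnd p) ⟨c₁, d₁⟩ ⟨c₂, d₂⟩ ⟨c₃, d₃⟩ ξ η := by
    rw [hG, naturalForm_radialEnd_apply]
  simp only [hJ_eq, hG_eq]
  rw [naturalForm_invariant_iff_exists_eq_mul (radialEnd_injective hV hp)
    (radialEnd_isSymmetric p) hS, exists_eq_mul_iff_re_and_axialValue hs_ne]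
  simp only [axialValue_apply, S₁, S₂, S₃]

/-- Fibrewise form of Theorem 2.3: `(G, J)` is almost Hermitian at the point
iff the coefficients of `G` are proportional to those of `J` via `λ` and
`λ + 2tμ`. -/
theorem almost_hermitian_iff_proportionality
    {V : Type*} [NormedAddCommGroup V] [InnerProductSpace ℝ V]
    [FiniteDimensional ℝ V] (hn : 2 ≤ Module.finrank ℝ V)
    (p : V) (hp : p ≠ 0)
    (a₁ a₂ a₃ b₁ b₂ b₃ t : ℝ) (ht : t = ‖p‖ ^ 2 / 2)
    (h1 : a₁ * a₂ = 1 + a₃ ^ 2)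
    (h2 : (a₁ + 2 * t * b₁) * (a₂ + 2 * t * b₂) = 1 + (a₃ + 2 * t * b₃) ^ 2)
    (J : V × V → V × V)
    (hJ : ∀ X θ : V, J (X, θ) =
      (-(a₃ • X) - (b₃ * ⟪p, X⟫) • p - a₂ • θ - (b₂ * ⟪p, θ⟫) • p,
       a₁ • X + (b₁ * ⟪p, X⟫) • p + a₃ • θ + (b₃ * ⟪p, θ⟫) • p))
    (c₁ c₂ c₃ d₁ d₂ d₃ : ℝ)
    (G : V × V → V × V → ℝ)
    (hG : ∀ X θ Y ω : V, G (X, θ) (Y, ω) =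
      c₁ * ⟪X, Y⟫ + d₁ * (⟪p, X⟫ * ⟪p, Y⟫) + c₂ * ⟪θ, ω⟫ +
        d₂ * (⟪p, θ⟫ * ⟪p, ω⟫) + c₃ * (⟪X, ω⟫ + ⟪θ, Y⟫) +
        d₃ * (⟪p, X⟫ * ⟪p, ω⟫ + ⟪p, θ⟫ * ⟪p, Y⟫)) :
    (∀ ξ η : V × V, G (J ξ) (J η) = G ξ η) ↔
      ∃ lam mu : ℝ,
        c₁ = lam * a₁ ∧ c₂ = lam * a₂ ∧ c₃ = lam * a₃ ∧
        c₁ + 2 * t * d₁ = (lam + 2 * t * mu) * (a₁ + 2 * t * b₁) ∧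
        c₂ + 2 * t * d₂ = (lam + 2 * t * mu) * (a₂ + 2 * t * b₂) ∧
        c₃ + 2 * t * d₃ = (lam + 2 * t * mu) * (a₃ + 2 * t * b₃) :=
  almost_hermitian_iff_proportionality_general (Module.lt_rank_of_lt_finrank hn) p hp
    a₁ a₂ a₃ b₁ b₂ b₃ t ht h1 h2 J hJ c₁ c₂ c₃ d₁ d₂ d₃ G hG
end

section
/- Let V be a finite-dimensional real inner product space, let p ∈ V, and set t = ‖p‖²/2. Let c₁, c₂, c₃, d₁, d₂, d₃ be real numbers satisfying c₁ > 0, c₁c₂ − c₃² > 0, c₁ + 2td₁ > 0, and (c₁ + 2td₁)(c₂ + 2td₂) − (c₃ + 2td₃)² > 0. Then the symmetric bilinear form G on V × V defined by G((X,θ),(Y,ω)) = c₁⟨X,Y⟩ + d₁⟨p,X⟩⟨p,Y⟩ + c₂⟨θ,ω⟩ + d₂⟨p,θ⟩⟨p,ω⟩ + c₃(⟨X,ω⟩ + ⟨θ,Y⟩) + d₃(⟨p,X⟩⟨p,ω⟩ + ⟨p,θ⟩⟨p,Y⟩) is positive definite. -/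
open scoped RealInnerProductSpace

/-!
The span of `p` and its orthogonal complement split `V × V` into two `G`-orthogonal summands. On the
complement `G` has the coefficients `cᵢ`; on the span, where `⟪p, X⟫ * ⟪p, Y⟫ = 2 * t * ⟪X, Y⟫`, it
has the coefficients `cᵢ + 2 * t * dᵢ`. Both restrictions are binary quadratic forms with vector
arguments, positive by completing the square.
-/

section StarProjection

variable {𝕜 E : Type*} [RCLike 𝕜] [NormedAddCommGroup E] [InnerProductSpace 𝕜 E]

theorem inner_eq_inner_starProjection_add_inner_starProjection_orthogonal
    (K : Submodule 𝕜 E) [K.HasOrthogonalProjection] (x y : E) :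
    inner 𝕜 x y = inner 𝕜 (K.starProjection x) (K.starProjection y) +
      inner 𝕜 (Kᗮ.starProjection x) (Kᗮ.starProjection y) := by
  have inner_starProjection (L : Submodule 𝕜 E) [L.HasOrthogonalProjection] :
      inner 𝕜 (L.starProjection x) (L.starProjection y) = inner 𝕜 x (L.starProjection y) := by
    rw [L.inner_starProjection_left_eq_right,
      Submodule.starProjection_eq_self_iff.mpr (L.starProjection_apply_mem y)]
  rw [inner_starProjection K, inner_starProjection Kᗮ, ← inner_add_right,
    K.starProjection_add_starProjection_orthogonal]

theorem norm_sq_mul_inner_starProjection_singleton (p x y : E) :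
    ((‖p‖ ^ 2 : ℝ) : 𝕜) * inner 𝕜 ((𝕜 ∙ p).starProjection x) ((𝕜 ∙ p).starProjection y) =
      inner 𝕜 x p * inner 𝕜 p y := by
  have starProjection_self : (𝕜 ∙ p).starProjection p = p :=
    Submodule.starProjection_eq_self_iff.mpr (Submodule.mem_span_singleton_self p)
  calc ((‖p‖ ^ 2 : ℝ) : 𝕜) * inner 𝕜 ((𝕜 ∙ p).starProjection x) ((𝕜 ∙ p).starProjection y)
      = inner 𝕜 ((𝕜 ∙ p).starProjection x) (inner 𝕜 p y • p) := by
        rw [← inner_smul_right, Submodule.smul_starProjection_singleton]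
    _ = inner 𝕜 x p * inner 𝕜 p y := by
        rw [Submodule.inner_starProjection_left_eq_right, map_smul, starProjection_self,
          inner_smul_right, mul_comm]

end StarProjection

section BinaryForm

variable {V : Type*} [NormedAddCommGroup V] [InnerProductSpace ℝ V]

/-- The binary quadratic form `a x² + 2 b x y + c y²` with vector arguments, products being read as
inner products; it describes a natural lifted metric on each summand of the splitting along `p`. -/
def binaryForm (a b c : ℝ) (x y : V) : ℝ :=
  a * ‖x‖ ^ 2 + 2 * b * ⟪x, y⟫ + c * ‖y‖ ^ 2

theorem mul_binaryForm (a b c : ℝ) (x y : V) :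
    a * binaryForm a b c x y = ‖a • x + b • y‖ ^ 2 + (a * c - b ^ 2) * ‖y‖ ^ 2 := by
  rw [binaryForm, norm_add_sq_real, norm_smul, norm_smul, real_inner_smul_left,
    real_inner_smul_right, mul_pow, mul_pow, Real.norm_eq_abs, Real.norm_eq_abs, sq_abs, sq_abs]
  ring

theorem binaryForm_nonneg {a b c : ℝ} (ha : 0 < a) (hdet : 0 ≤ a * c - b ^ 2) (x y : V) :
    0 ≤ binaryForm a b c x y := by
  refine nonneg_of_mul_nonneg_right ?_ ha
  rw [mul_binaryForm]
  exact add_nonneg (sq_nonneg _) (mul_nonneg hdet (sq_nonneg _))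

theorem binaryForm_pos {a b c : ℝ} (ha : 0 < a) (hdet : 0 < a * c - b ^ 2) {x y : V}
    (hxy : x ≠ 0 ∨ y ≠ 0) : 0 < binaryForm a b c x y := by
  by_cases hy : y = 0
  · have hx : x ≠ 0 := hxy.resolve_right (not_not.mpr hy)
    simp only [binaryForm, hy, inner_zero_right, norm_zero, ne_eq, OfNat.ofNat_ne_zero,
      not_false_eq_true, zero_pow, mul_zero, add_zero]
    positivity
  · refine pos_of_mul_pos_right ?_ ha.le
    rw [mul_binaryForm]
    exact add_pos_of_nonneg_of_pos (sq_nonneg _) (mul_pos hdet (pow_pos (norm_pos_iff.mpr hy) 2))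

theorem binaryForm_add_mul (a b c a' b' c' s : ℝ) (x y : V) :
    binaryForm (a + s * a') (b + s * b') (c + s * c') x y =
      binaryForm a b c x y + s * binaryForm a' b' c' x y := by
  simp only [binaryForm]
  ring

theorem binaryForm_eq_starProjection_add_starProjection_orthogonal
    (K : Submodule ℝ V) [K.HasOrthogonalProjection] (a b c : ℝ) (x y : V) :
    binaryForm a b c x y = binaryForm a b c (K.starProjection x) (K.starProjection y) +
      binaryForm a b c (Kᗮ.starProjection x) (Kᗮ.starProjection y) := by
  simp only [binaryForm, Submodule.norm_sq_eq_add_norm_sq_starProjection x K,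
    Submodule.norm_sq_eq_add_norm_sq_starProjection y K,
    inner_eq_inner_starProjection_add_inner_starProjection_orthogonal K x y]
  ring

theorem norm_sq_mul_binaryForm_starProjection_singleton (p : V) (a b c : ℝ) (x y : V) :
    ‖p‖ ^ 2 * binaryForm a b c ((ℝ ∙ p).starProjection x) ((ℝ ∙ p).starProjection y) =
      a * ⟪p, x⟫ ^ 2 + 2 * b * (⟪p, x⟫ * ⟪p, y⟫) + c * ⟪p, y⟫ ^ 2 := by
  have norm_sq_mul_inner (u v : V) :
      ‖p‖ ^ 2 * ⟪(ℝ ∙ p).starProjection u, (ℝ ∙ p).starProjection v⟫ = ⟪p, u⟫ * ⟪p, v⟫ := by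
    rw [real_inner_comm u p]
    exact norm_sq_mul_inner_starProjection_singleton p u v
  simp only [binaryForm, ← real_inner_self_eq_norm_sq ((ℝ ∙ p).starProjection _)]
  linear_combination a * norm_sq_mul_inner x x + 2 * b * norm_sq_mul_inner x y +
    c * norm_sq_mul_inner y y

theorem binaryForm_starProjection_add_binaryForm_starProjection_orthogonal_pos
    (K : Submodule ℝ V) [K.HasOrthogonalProjection] {a b c a' b' c' : ℝ}
    (ha : 0 < a) (hdet : 0 < a * c - b ^ 2) (ha' : 0 < a') (hdet' : 0 < a' * c' - b' ^ 2)
    {x y : V} (hxy : x ≠ 0 ∨ y ≠ 0) :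
    0 < binaryForm a b c (K.starProjection x) (K.starProjection y) +
      binaryForm a' b' c' (Kᗮ.starProjection x) (Kᗮ.starProjection y) := by
  by_cases hK : K.starProjection x ≠ 0 ∨ K.starProjection y ≠ 0
  · exact add_pos_of_pos_of_nonneg (binaryForm_pos ha hdet hK)
      (binaryForm_nonneg ha' hdet'.le _ _)
  · push Not at hK
    have hKperp : Kᗮ.starProjection x ≠ 0 ∨ Kᗮ.starProjection y ≠ 0 := by
      rw [← K.starProjection_add_starProjection_orthogonal x,
        ← K.starProjection_add_starProjection_orthogonal y] at hxy
      simpa only [hK.1, hK.2, zero_add] using hxy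
    exact add_pos_of_nonneg_of_pos (binaryForm_nonneg ha hdet.le _ _)
      (binaryForm_pos ha' hdet' hKperp)

end BinaryForm

theorem metric_pos_def_of_coeff_pos_general
    {V : Type*} [NormedAddCommGroup V] [InnerProductSpace ℝ V]
    (p : V) (t : ℝ) (ht : t = ‖p‖ ^ 2 / 2)
    (c₁ c₂ c₃ d₁ d₂ d₃ : ℝ)
    (hc₁ : 0 < c₁) (hdet : 0 < c₁ * c₂ - c₃ ^ 2)
    (hc₁t : 0 < c₁ + 2 * t * d₁)
    (hdett : 0 < (c₁ + 2 * t * d₁) * (c₂ + 2 * t * d₂) - (c₃ + 2 * t * d₃) ^ 2)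
    (G : V × V → V × V → ℝ)
    (hG : ∀ X θ Y ω : V, G (X, θ) (Y, ω) =
      c₁ * ⟪X, Y⟫ + d₁ * (⟪p, X⟫ * ⟪p, Y⟫) + c₂ * ⟪θ, ω⟫ +
        d₂ * (⟪p, θ⟫ * ⟪p, ω⟫) + c₃ * (⟪X, ω⟫ + ⟪θ, Y⟫) +
        d₃ * (⟪p, X⟫ * ⟪p, ω⟫ + ⟪p, θ⟫ * ⟪p, Y⟫)) :
    ∀ ξ : V × V, ξ ≠ 0 → 0 < G ξ ξ := by
  rintro ⟨X, θ⟩ hξ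
  have hXθ : X ≠ 0 ∨ θ ≠ 0 := by simpa only [ne_eq, Prod.mk_eq_zero, not_and_or] using hξ
  have two_t : 2 * t = ‖p‖ ^ 2 := by linarith
  have G_self : G (X, θ) (X, θ) = binaryForm c₁ c₃ c₂ X θ +
      2 * t * binaryForm d₁ d₃ d₂ ((ℝ ∙ p).starProjection X) ((ℝ ∙ p).starProjection θ) := by
    rw [two_t, norm_sq_mul_binaryForm_starProjection_singleton, hG, binaryForm,
      real_inner_self_eq_norm_sq, real_inner_self_eq_norm_sq, real_inner_comm X θ]
    ring
  rw [G_self, binaryForm_eq_starProjection_add_starProjection_orthogonal (ℝ ∙ p),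
    add_right_comm, ← binaryForm_add_mul]
  exact binaryForm_starProjection_add_binaryForm_starProjection_orthogonal_pos (ℝ ∙ p)
    hc₁t hdett hc₁ hdet hXθ

/-- Fibrewise positivity criterion for the general natural lifted metric `G`. -/
theorem metric_pos_def_of_coeff_pos
    {V : Type*} [NormedAddCommGroup V] [InnerProductSpace ℝ V]
    [FiniteDimensional ℝ V]
    (p : V) (t : ℝ) (ht : t = ‖p‖ ^ 2 / 2)
    (c₁ c₂ c₃ d₁ d₂ d₃ : ℝ)
    (hc₁ : 0 < c₁) (hdet : 0 < c₁ * c₂ - c₃ ^ 2)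
    (hc₁t : 0 < c₁ + 2 * t * d₁)
    (hdett : 0 < (c₁ + 2 * t * d₁) * (c₂ + 2 * t * d₂) - (c₃ + 2 * t * d₃) ^ 2)
    (G : V × V → V × V → ℝ)
    (hG : ∀ X θ Y ω : V, G (X, θ) (Y, ω) =
      c₁ * ⟪X, Y⟫ + d₁ * (⟪p, X⟫ * ⟪p, Y⟫) + c₂ * ⟪θ, ω⟫ +
        d₂ * (⟪p, θ⟫ * ⟪p, ω⟫) + c₃ * (⟪X, ω⟫ + ⟪θ, Y⟫) +
        d₃ * (⟪p, X⟫ * ⟪p, ω⟫ + ⟪p, θ⟫ * ⟪p, Y⟫)) :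
    ∀ ξ : V × V, ξ ≠ 0 → 0 < G ξ ξ :=
  metric_pos_def_of_coeff_pos_general p t ht c₁ c₂ c₃ d₁ d₂ d₃ hc₁ hdet hc₁t hdett G hG
end

section
/- Let V be a finite-dimensional real inner product space, let p ∈ V, and set t = ‖p‖²/2. Let a₁, a₂, a₃, b₁, b₂, b₃, λ, μ be real numbers with a₁ > 0, a₁ + 2tb₁ > 0, λ > 0, λ + 2tμ > 0, a₁a₂ = 1 + a₃², and (a₁ + 2tb₁)(a₂ + 2tb₂) = 1 + (a₃ + 2tb₃)². Define c₁ = λa₁, c₂ = λa₂, c₃ = λa₃, and d₁, d₂, d₃ by c_i + 2td_i = (λ + 2tμ)(a_i + 2tb_i) for i = 1, 2, 3 (for t = 0 take d_i arbitrary subject to these equations, which are then vacuous). Then the symmetric bilinear form G on V × V defined by G((X,θ),(Y,ω)) = c₁⟨X,Y⟩ + d₁⟨p,X⟩⟨p,Y⟩ + c₂⟨θ,ω⟩ + d₂⟨p,θ⟩⟨p,ω⟩ + c₃(⟨X,ω⟩ + ⟨θ,Y⟩) + d₃(⟨p,X⟩⟨p,ω⟩ + ⟨p,θ⟩⟨p,Y⟩)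 is positive definite. -/
open scoped RealInnerProductSpace

/-!
The form splits orthogonally along `V = ℝp ⊕ p^⊥`, applied to both factors of `V × V`. Since
`⟪p, X⟫ * ⟪p, Y⟫ = 2t ⟪X_p, Y_p⟫` for the components `X_p`, `Y_p` along `p`, the form has constant
coefficients on each summand: `c_i` on the part orthogonal to `p`, and `c_i + 2t d_i` on the radial
part. Up to the positive factors `λ` and `λ + 2tμ` these are `a_i` and `a_i + 2t b_i`, whose
symmetric `2 × 2` matrices have positive determinant by the almost complex conditions.
-/

theorem mul_sq_lt_mul_mul_mul {R : Type*} [CommRing R] [LinearOrder R] [IsStrictOrderedRing R]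
    {k a b c : R} (hk : k ≠ 0) (h : c ^ 2 < a * b) : (k * c) ^ 2 < k * a * (k * b) :=
  calc
    (k * c) ^ 2 = k ^ 2 * c ^ 2 := mul_pow k c 2
    _ < k ^ 2 * (a * b) := mul_lt_mul_of_pos_left h (sq_pos_of_ne_zero hk)
    _ = k * a * (k * b) := by ring

section Projection

variable {𝕜 E : Type*} [RCLike 𝕜] [NormedAddCommGroup E] [InnerProductSpace 𝕜 E]

theorem inner_starProjection_starProjection (K : Submodule 𝕜 E) [K.HasOrthogonalProjection]
    (x y : E) : inner 𝕜 (K.starProjection x) (K.starProjection y) =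
      inner 𝕜 x (K.starProjection y) := by
  rw [K.inner_starProjection_left_eq_right,
    Submodule.starProjection_eq_self_iff.mpr (K.starProjection_apply_mem y)]

end Projection

section Seminormed

variable {V : Type*} [SeminormedAddCommGroup V] [InnerProductSpace ℝ V]

/-- The symmetric bilinear form on `V × V` whose blocks are the multiples `α`, `β` (diagonal) and
`γ` (off-diagonal) of the inner product of `V`. -/
def scalarBlockForm (α β γ : ℝ) (ξ η : V × V) : ℝ :=
  α * ⟪ξ.1, η.1⟫ + β * ⟪ξ.2, η.2⟫ + γ * (⟪ξ.1, η.2⟫ + ⟪ξ.2, η.1⟫)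

theorem mul_scalarBlockForm_self (α β γ : ℝ) (ξ : V × V) :
    α * scalarBlockForm α β γ ξ ξ =
      ‖α • ξ.1 + γ • ξ.2‖ ^ 2 + (α * β - γ ^ 2) * ‖ξ.2‖ ^ 2 := by
  simp only [scalarBlockForm, ← real_inner_self_eq_norm_sq, inner_add_left, inner_add_right,
    real_inner_smul_left, real_inner_smul_right, real_inner_comm ξ.1 ξ.2]
  ring

theorem scalarBlockForm_self_nonneg {α β γ : ℝ} (hα : 0 < α) (hdet : γ ^ 2 ≤ α * β) (ξ : V × V) :
    0 ≤ scalarBlockForm α β γ ξ ξ := by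
  refine nonneg_of_mul_nonneg_right ?_ hα
  rw [mul_scalarBlockForm_self]
  have := sub_nonneg.mpr hdet
  positivity

end Seminormed

section Normed

variable {V : Type*} [NormedAddCommGroup V] [InnerProductSpace ℝ V]

theorem scalarBlockForm_self_pos {α β γ : ℝ} (hα : 0 < α) (hdet : γ ^ 2 < α * β) {ξ : V × V}
    (hξ : ξ ≠ 0) : 0 < scalarBlockForm α β γ ξ ξ := by
  refine pos_of_mul_pos_right ?_ hα.le
  rw [mul_scalarBlockForm_self]
  have := sub_pos.mpr hdet
  by_cases h₂ : ξ.2 = 0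
  · have h₁ : ξ.1 ≠ 0 := fun h₁ ↦ hξ (Prod.ext h₁ h₂)
    have h : 0 < ‖α • ξ.1‖ := norm_pos_iff.mpr (smul_ne_zero hα.ne' h₁)
    simp only [h₂, smul_zero, add_zero]
    positivity
  · positivity

theorem scalarBlockForm_eq_add_orthogonal (K : Submodule ℝ V) [K.HasOrthogonalProjection]
    (α β γ : ℝ) (ξ η : V × V) :
    scalarBlockForm α β γ ξ η =
      scalarBlockForm α β γ (ξ.map K.starProjection K.starProjection)
          (η.map K.starProjection K.starProjection) +
        scalarBlockForm α β γ (ξ.map Kᗮ.starProjection Kᗮ.starProjection)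
          (η.map Kᗮ.starProjection Kᗮ.starProjection) := by
  simp only [scalarBlockForm, Prod.map_fst, Prod.map_snd,
    inner_eq_inner_starProjection_add_inner_starProjection_orthogonal K ξ.1,
    inner_eq_inner_starProjection_add_inner_starProjection_orthogonal K ξ.2]
  ring

/-- The general natural lifted symmetric bilinear form on `T*M` at the cotangent vector `p`. A
tangent vector to `T*M` is encoded as the pair of its horizontal and vertical components. -/
def naturalLiftForm (p : V) (c₁ c₂ c₃ d₁ d₂ d₃ : ℝ) (ξ η : V × V) : ℝ :=
  c₁ * ⟪ξ.1, η.1⟫ + d₁ * (⟪p, ξ.1⟫ * ⟪p, η.1⟫) + c₂ * ⟪ξ.2, η.2⟫ +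
    d₂ * (⟪p, ξ.2⟫ * ⟪p, η.2⟫) + c₃ * (⟪ξ.1, η.2⟫ + ⟪ξ.2, η.1⟫) +
    d₃ * (⟪p, ξ.1⟫ * ⟪p, η.2⟫ + ⟪p, ξ.2⟫ * ⟪p, η.1⟫)

theorem naturalLiftForm_eq_radial_add_orthogonal (p : V) (c₁ c₂ c₃ d₁ d₂ d₃ : ℝ)
    (ξ η : V × V) :
    naturalLiftForm p c₁ c₂ c₃ d₁ d₂ d₃ ξ η =
      scalarBlockForm (c₁ + ‖p‖ ^ 2 * d₁) (c₂ + ‖p‖ ^ 2 * d₂) (c₃ + ‖p‖ ^ 2 * d₃)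
          (ξ.map (ℝ ∙ p).starProjection (ℝ ∙ p).starProjection)
          (η.map (ℝ ∙ p).starProjection (ℝ ∙ p).starProjection) +
        scalarBlockForm c₁ c₂ c₃
          (ξ.map (ℝ ∙ p)ᗮ.starProjection (ℝ ∙ p)ᗮ.starProjection)
          (η.map (ℝ ∙ p)ᗮ.starProjection (ℝ ∙ p)ᗮ.starProjection) := by
  have hradial (x y : V) : ⟪p, x⟫ * ⟪p, y⟫ =
      ‖p‖ ^ 2 * ⟪(ℝ ∙ p).starProjection x, (ℝ ∙ p).starProjection y⟫ := by
    rw [real_inner_comm]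
    exact (norm_sq_mul_inner_starProjection_singleton p x y).symm
  have hsplit := scalarBlockForm_eq_add_orthogonal (ℝ ∙ p) c₁ c₂ c₃ ξ η
  simp only [naturalLiftForm, hradial]
  simp only [scalarBlockForm, Prod.map_fst, Prod.map_snd] at hsplit ⊢
  linear_combination hsplit

theorem naturalLiftForm_self_pos {p : V} {c₁ c₂ c₃ d₁ d₂ d₃ : ℝ}
    (hc₁ : 0 < c₁) (hc : c₃ ^ 2 < c₁ * c₂)
    (hr₁ : 0 < c₁ + ‖p‖ ^ 2 * d₁)
    (hr : (c₃ + ‖p‖ ^ 2 * d₃) ^ 2 < (c₁ + ‖p‖ ^ 2 * d₁) * (c₂ + ‖p‖ ^ 2 * d₂))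
    {ξ : V × V} (hξ : ξ ≠ 0) : 0 < naturalLiftForm p c₁ c₂ c₃ d₁ d₂ d₃ ξ ξ := by
  rw [naturalLiftForm_eq_radial_add_orthogonal]
  set ξr := ξ.map (ℝ ∙ p).starProjection (ℝ ∙ p).starProjection
  set ξo := ξ.map (ℝ ∙ p)ᗮ.starProjection (ℝ ∙ p)ᗮ.starProjection
  have hsum : ξr + ξo = ξ :=
    Prod.ext ((ℝ ∙ p).starProjection_add_starProjection_orthogonal ξ.1)
      ((ℝ ∙ p).starProjection_add_starProjection_orthogonal ξ.2)
  by_cases h : ξr = 0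
  · have hξo_ne : ξo ≠ 0 := by rwa [← hsum, h, zero_add] at hξ
    exact add_pos_of_nonneg_of_pos (scalarBlockForm_self_nonneg hr₁ hr.le ξr)
      (scalarBlockForm_self_pos hc₁ hc hξo_ne)
  · exact add_pos_of_pos_of_nonneg (scalarBlockForm_self_pos hr₁ hr h)
      (scalarBlockForm_self_nonneg hc₁ hc.le ξo)

theorem metric_pos_def_of_proportionality_general {p : V} {t : ℝ} (ht : t = ‖p‖ ^ 2 / 2)
    {a₁ a₂ a₃ b₁ b₂ b₃ lam mu : ℝ}
    (ha₁ : 0 < a₁) (ha₁t : 0 < a₁ + 2 * t * b₁)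
    (hlam : 0 < lam) (hlamt : 0 < lam + 2 * t * mu)
    (ha : a₃ ^ 2 < a₁ * a₂)
    (hat : (a₃ + 2 * t * b₃) ^ 2 < (a₁ + 2 * t * b₁) * (a₂ + 2 * t * b₂))
    {c₁ c₂ c₃ d₁ d₂ d₃ : ℝ}
    (hc₁ : c₁ = lam * a₁) (hc₂ : c₂ = lam * a₂) (hc₃ : c₃ = lam * a₃)
    (hd₁ : c₁ + 2 * t * d₁ = (lam + 2 * t * mu) * (a₁ + 2 * t * b₁))
    (hd₂ : c₂ + 2 * t * d₂ = (lam + 2 * t * mu) * (a₂ + 2 * t * b₂))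
    (hd₃ : c₃ + 2 * t * d₃ = (lam + 2 * t * mu) * (a₃ + 2 * t * b₃))
    {ξ : V × V} (hξ : ξ ≠ 0) : 0 < naturalLiftForm p c₁ c₂ c₃ d₁ d₂ d₃ ξ ξ := by
  have hp : ‖p‖ ^ 2 = 2 * t := by linarith
  apply naturalLiftForm_self_pos _ _ _ _ hξ
  · rw [hc₁]
    exact mul_pos hlam ha₁
  · rw [hc₁, hc₂, hc₃]
    exact mul_sq_lt_mul_mul_mul hlam.ne' ha
  · rw [hp, hd₁]
    exact mul_pos hlamt ha₁t
  · rw [hp, hd₁, hd₂, hd₃]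
    exact mul_sq_lt_mul_mul_mul hlamt.ne' hat

end Normed

/-- Fibrewise statement that the almost Hermitian pair of Theorem 2.3 yields a
Riemannian metric when `λ > 0` and `λ + 2tμ > 0`. -/
theorem metric_pos_def_of_proportionality
    {V : Type*} [NormedAddCommGroup V] [InnerProductSpace ℝ V]
    [FiniteDimensional ℝ V]
    (p : V) (t : ℝ) (ht : t = ‖p‖ ^ 2 / 2)
    (a₁ a₂ a₃ b₁ b₂ b₃ lam mu : ℝ)
    (ha₁ : 0 < a₁) (ha₁t : 0 < a₁ + 2 * t * b₁)
    (hlam : 0 < lam) (hlamt : 0 < lam + 2 * t * mu)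
    (h1 : a₁ * a₂ = 1 + a₃ ^ 2)
    (h2 : (a₁ + 2 * t * b₁) * (a₂ + 2 * t * b₂) = 1 + (a₃ + 2 * t * b₃) ^ 2)
    (c₁ c₂ c₃ d₁ d₂ d₃ : ℝ)
    (hc₁ : c₁ = lam * a₁) (hc₂ : c₂ = lam * a₂) (hc₃ : c₃ = lam * a₃)
    (hd₁ : c₁ + 2 * t * d₁ = (lam + 2 * t * mu) * (a₁ + 2 * t * b₁))
    (hd₂ : c₂ + 2 * t * d₂ = (lam + 2 * t * mu) * (a₂ + 2 * t * b₂))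
    (hd₃ : c₃ + 2 * t * d₃ = (lam + 2 * t * mu) * (a₃ + 2 * t * b₃))
    (G : V × V → V × V → ℝ)
    (hG : ∀ X θ Y ω : V, G (X, θ) (Y, ω) =
      c₁ * ⟪X, Y⟫ + d₁ * (⟪p, X⟫ * ⟪p, Y⟫) + c₂ * ⟪θ, ω⟫ +
        d₂ * (⟪p, θ⟫ * ⟪p, ω⟫) + c₃ * (⟪X, ω⟫ + ⟪θ, Y⟫) +
        d₃ * (⟪p, X⟫ * ⟪p, ω⟫ + ⟪p, θ⟫ * ⟪p, Y⟫)) :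
    ∀ ξ : V × V, ξ ≠ 0 → 0 < G ξ ξ := by
  rintro ⟨X, θ⟩ hξ
  exact (metric_pos_def_of_proportionality_general ht ha₁ ha₁t hlam hlamt (by linarith)
    (by linarith) hc₁ hc₂ hc₃ hd₁ hd₂ hd₃ hξ).trans_eq (hG X θ X θ).symm
end

section
/- Let V be a finite-dimensional real inner product space, let p ∈ V, set t = ‖p‖²/2, and let P : V → V denote the endomorphism P(X) = ⟨p,X⟩p. Let c₁, c₂, c₃, d₁, d₂, d₃ be real numbers such that α := c₁c₂ − c₃² ≠ 0, β := (c₁ + 2td₁)(c₂ + 2td₂) − (c₃ + 2td₃)² ≠ 0, and c₂ + 2td₂ ≠ 0. Define G₁ = c₁·id + d₁P, G₂ = c₂·id + d₂P, G₃ = c₃·id + d₃P, and define e₁ = c₂/α, e₂ = c₁/α, e₃ = −c₃/α, f₁ = −(c₂d₁e₁ − c₃d₃e₁ − c₃d₂e₃ + c₂d₃e₃ + 2d₁d₂e₁t − 2d₃²e₁t)/(c₁c₂ − c₃² + 2c₂d₁t + 2c₁d₂t − 4c₃d₃t + 4d₁d₂t² − 4d₃²t²), f₂ = (c₃ + 2d₃t)·[(d₃e₁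 + d₂e₃)(c₁ + 2d₁t) − (d₁e₁ + d₃e₃)(c₃ + 2d₃t)] / ((c₂ + 2d₂t)·[(c₁ + 2d₁t)(c₂ + 2d₂t) − (c₃ + 2d₃t)²]) − (d₂e₂ + d₃e₃)/(c₂ + 2d₂t), f₃ = −[(d₃e₁ + d₂e₃)(c₁ + 2d₁t) − (d₁e₁ + d₃e₃)(c₃ + 2d₃t)] / [(c₁ + 2d₁t)(c₂ + 2d₂t) − (c₃ + 2d₃t)²], and set H₁ = e₁·id + f₁P, H₂ = e₂·id + f₂P, H₃ = e₃·id + f₃P. Then G₁H₁ + G₃H₃ = id, G₁H₃ + G₃H₂ = 0, G₃H₁ + G₂H₃ = 0, and G₃H₃ + G₂H₂ = id; that is, the block operator with blocks (H₁, H₃; H₃, H₂) is the inverse of the block operator with blocks (G₁, G₃; G₃, G₂) on V × V. -/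
open scoped RealInnerProductSpace

/-!
Write `A`, `D`, `E`, `F` for the symmetric `2 × 2` matrices of the `cᵢ`, `dᵢ`, `eᵢ`, `fᵢ`. Since
`P ^ 2 = 2tP`, the product of the block operators `A + DP` and `E + FP` is
`AE + ((A + 2tD)F + DE)P`, so it is the identity as soon as `AE = 1` and `(A + 2tD)F = -DE`.
The solution `F = -(A + 2tD)⁻¹DA⁻¹` of the second equation is symmetric, because
`DA⁻¹(A + 2tD) = D + 2tDA⁻¹D = (A + 2tD)A⁻¹D`. Cramer's rule on its first column gives `f₁` and
`f₃`, and then the second row of the second column gives `f₂`.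
-/

open Matrix

section NaturalBlock

variable {n R S : Type*} [CommSemiring R] [Semiring S] [Algebra R S]

/-- The block operator whose `(i, j)` block is `A i j • 1 + D i j • P`. For `n = Fin 2` and
symmetric `A`, `D` these are the matrices of natural lifted metrics in the adapted frame. The blocks
are taken in an arbitrary algebra `S` rather than as maps on vectors, so that composition of block
operators is the multiplication of `Matrix n n S`. -/
def naturalBlock (P : S) (A D : Matrix n n R) : Matrix n n S :=
  of fun i j => A i j • 1 + D i j • P

theorem naturalBlock_apply (P : S) (A D : Matrix n n R) (i j : n) :
    naturalBlock P A D i j = A i j • 1 + D i j • P :=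
  rfl

theorem naturalBlock_one_zero [DecidableEq n] (P : S) :
    naturalBlock P (1 : Matrix n n R) 0 = 1 := by
  ext i j
  simp [naturalBlock_apply, one_apply, ite_smul]

theorem naturalBlock_mul [Fintype n] {P : S} {s : R} (hP : P * P = s • P)
    (A D E F : Matrix n n R) :
    naturalBlock P A D * naturalBlock P E F =
      naturalBlock P (A * E) (A * F + D * E + s • (D * F)) := by
  ext i j
  simp only [naturalBlock_apply, mul_apply, Matrix.add_apply, Matrix.smul_apply, smul_eq_mul,
    Finset.mul_sum, ← Finset.sum_add_distrib, Finset.sum_smul]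
  refine Finset.sum_congr rfl fun k _ => ?_
  simp only [add_mul, mul_add, smul_mul_assoc, mul_smul_comm, one_mul, mul_one, hP]
  module

end NaturalBlock

theorem naturalBlock_mul_eq_one {n R S : Type*} [Fintype n] [DecidableEq n] [CommRing R] [Ring S]
    [Algebra R S] {P : S} {s : R} (hP : P * P = s • P) {A D E F : Matrix n n R} (hAE : A * E = 1)
    (hF : (A + s • D) * F = -(D * E)) :
    naturalBlock P A D * naturalBlock P E F = 1 := by
  have h_coeff_P : A * F + D * E + s • (D * F) = 0 := by
    rw [add_right_comm, ← smul_mul_assoc, ← add_mul, hF, neg_add_cancel]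
  rw [naturalBlock_mul hP, hAE, h_coeff_P, naturalBlock_one_zero]

section Coefficients

theorem isSymm_of_add_smul_mul_eq {n R : Type*} [Fintype n] [DecidableEq n] [CommRing R]
    {A D F : Matrix n n R} {s : R} (hA : A.IsSymm) (hD : D.IsSymm) (hA_unit : IsUnit A.det)
    (hB_unit : IsUnit (A + s • D).det) (hF : (A + s • D) * F = -(D * A⁻¹)) : F.IsSymm := by
  have hB : (A + s • D).IsSymm := hA.add (hD.smul s)
  have hFt : Fᵀ * (A + s • D) = -(A⁻¹ * D) := by
    simpa only [transpose_mul, transpose_neg, hB.eq, hD.eq, hA.inv.eq] using congrArg transpose hF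
  have hcomm : D * A⁻¹ * (A + s • D) = (A + s • D) * (A⁻¹ * D) := by
    simp only [mul_add, add_mul, mul_smul_comm, smul_mul_assoc, Matrix.mul_assoc,
      nonsing_inv_mul A hA_unit, mul_nonsing_inv_cancel_left A D hA_unit, Matrix.mul_one]
  have hBB : (A + s • D) * (Fᵀ * (A + s • D)) = (A + s • D) * (F * (A + s • D)) := by
    rw [hFt, ← Matrix.mul_assoc, hF, neg_mul, hcomm, mul_neg]
  have hB_isUnit : IsUnit (A + s • D) := (isUnit_iff_isUnit_det _).2 hB_unit
  exact hB_isUnit.mul_right_cancel (hB_isUnit.mul_left_cancel hBB)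

variable {K : Type*} [Field K]

theorem inv_symm_fin_two (a b c : K) :
    !![a, b; b, c]⁻¹ =
      !![c / (a * c - b ^ 2), -b / (a * c - b ^ 2); -b / (a * c - b ^ 2), a / (a * c - b ^ 2)] := by
  simp only [inv_def, adjugate_fin_two_of, det_fin_two_of, Ring.inverse_eq_inv', ← sq, smul_of,
    smul_cons, smul_empty, smul_eq_mul, ← div_eq_inv_mul]

theorem eq_of_symm_fin_two_mul_eq_of_isSymm {b₁ b₂ b₃ : K}
    {F M : Matrix (Fin 2) (Fin 2) K} (hF : F.IsSymm) (hM : !![b₁, b₃; b₃, b₂] * F = M)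
    (hdet : b₁ * b₂ - b₃ ^ 2 ≠ 0) (hb₂ : b₂ ≠ 0) {f₁ f₂ f₃ : K}
    (hf₁ : f₁ = (b₂ * M 0 0 - b₃ * M 1 0) / (b₁ * b₂ - b₃ ^ 2))
    (hf₃ : f₃ = (b₁ * M 1 0 - b₃ * M 0 0) / (b₁ * b₂ - b₃ ^ 2))
    (hf₂ : f₂ = (M 1 1 - b₃ * f₃) / b₂) :
    F = !![f₁, f₃; f₃, f₂] := by
  have hM₀₀ : M 0 0 = b₁ * F 0 0 + b₃ * F 1 0 := by
    rw [← hM, mul_apply, Fin.sum_univ_two]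
    rfl
  have hM₁₀ : M 1 0 = b₃ * F 0 0 + b₂ * F 1 0 := by
    rw [← hM, mul_apply, Fin.sum_univ_two]
    rfl
  have hM₁₁ : M 1 1 = b₃ * F 0 1 + b₂ * F 1 1 := by
    rw [← hM, mul_apply, Fin.sum_univ_two]
    rfl
  have hF₀₁ : F 0 1 = F 1 0 := hF.apply 1 0
  have hF₀₀ : F 0 0 = f₁ := by
    rw [hf₁, eq_div_iff hdet, hM₀₀, hM₁₀]
    ring
  have hF₁₀ : F 1 0 = f₃ := by
    rw [hf₃, eq_div_iff hdet, hM₀₀, hM₁₀]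
    ring
  have hF₁₁ : F 1 1 = f₂ := by
    rw [hf₂, eq_div_iff hb₂, hM₁₁, hF₀₁, hF₁₀]
    ring
  rw [eta_fin_two F, hF₀₁, hF₀₀, hF₁₀, hF₁₁]

theorem symm_fin_two_mul_eq_neg_mul_inv {A D : Matrix (Fin 2) (Fin 2) K} {s b₁ b₂ b₃ : K}
    (hA : A.IsSymm) (hD : D.IsSymm) (hA_det : A.det ≠ 0)
    (hB : A + s • D = !![b₁, b₃; b₃, b₂]) (hB_det : b₁ * b₂ - b₃ ^ 2 ≠ 0) (hb₂ : b₂ ≠ 0)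
    {f₁ f₂ f₃ : K}
    (hf₁ : f₁ = -((b₂ * (D * A⁻¹) 0 0 - b₃ * (D * A⁻¹) 1 0) / (b₁ * b₂ - b₃ ^ 2)))
    (hf₃ : f₃ = -((b₁ * (D * A⁻¹) 1 0 - b₃ * (D * A⁻¹) 0 0) / (b₁ * b₂ - b₃ ^ 2)))
    (hf₂ : f₂ = -(((D * A⁻¹) 1 1 + b₃ * f₃) / b₂)) :
    (A + s • D) * !![f₁, f₃; f₃, f₂] = -(D * A⁻¹) := by
  have hB_unit : IsUnit (A + s • D).det := by
    rw [hB, det_fin_two_of, ← sq]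
    exact hB_det.isUnit
  obtain ⟨F, hF⟩ : ∃ F, (A + s • D) * F = -(D * A⁻¹) :=
    ⟨_, mul_nonsing_inv_cancel_left _ _ hB_unit⟩
  have hF_symm : F.IsSymm := isSymm_of_add_smul_mul_eq hA hD hA_det.isUnit hB_unit hF
  have hF_eq : F = !![f₁, f₃; f₃, f₂] := by
    refine eq_of_symm_fin_two_mul_eq_of_isSymm hF_symm (hB ▸ hF) hB_det hb₂ ?_ ?_ ?_
    · rw [hf₁, Matrix.neg_apply, Matrix.neg_apply]
      ring
    · rw [hf₃, Matrix.neg_apply, Matrix.neg_apply]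
      ring
    · rw [hf₂, Matrix.neg_apply]
      ring
  rw [← hF_eq, hF]

end Coefficients

theorem rankOne_self_mul_self {V : Type*} [NormedAddCommGroup V] [InnerProductSpace ℝ V] (p : V) :
    (InnerProductSpace.rankOne ℝ p p : Module.End ℝ V) * InnerProductSpace.rankOne ℝ p p =
      ‖p‖ ^ 2 • (InnerProductSpace.rankOne ℝ p p : Module.End ℝ V) := by
  ext x
  simp [smul_smul, mul_comm]

theorem blocks_inverse_of_metric_general
    {K V : Type*} [Field K] [AddCommGroup V] [Module K V]
    (P : Module.End K V) (t : K) (hP : P * P = (2 * t) • P)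
    (c₁ c₂ c₃ d₁ d₂ d₃ : K)
    (hα : c₁ * c₂ - c₃ ^ 2 ≠ 0)
    (hβ : (c₁ + 2 * t * d₁) * (c₂ + 2 * t * d₂) - (c₃ + 2 * t * d₃) ^ 2 ≠ 0)
    (hc₂t : c₂ + 2 * t * d₂ ≠ 0)
    (G₁ G₂ G₃ : V → V)
    (hG₁ : ∀ x, G₁ x = c₁ • x + d₁ • P x)
    (hG₂ : ∀ x, G₂ x = c₂ • x + d₂ • P x)
    (hG₃ : ∀ x, G₃ x = c₃ • x + d₃ • P x)
    (e₁ e₂ e₃ f₁ f₂ f₃ : K)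
    (he₁ : e₁ = c₂ / (c₁ * c₂ - c₃ ^ 2))
    (he₂ : e₂ = c₁ / (c₁ * c₂ - c₃ ^ 2))
    (he₃ : e₃ = -c₃ / (c₁ * c₂ - c₃ ^ 2))
    (hf₁ : f₁ = -((c₂ * d₁ * e₁ - c₃ * d₃ * e₁ - c₃ * d₂ * e₃ + c₂ * d₃ * e₃ +
        2 * d₁ * d₂ * e₁ * t - 2 * d₃ ^ 2 * e₁ * t) /
      (c₁ * c₂ - c₃ ^ 2 + 2 * c₂ * d₁ * t + 2 * c₁ * d₂ * t - 4 * c₃ * d₃ * t +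
        4 * d₁ * d₂ * t ^ 2 - 4 * d₃ ^ 2 * t ^ 2)))
    (hf₂ : f₂ = (c₃ + 2 * d₃ * t) *
        ((d₃ * e₁ + d₂ * e₃) * (c₁ + 2 * d₁ * t) -
          (d₁ * e₁ + d₃ * e₃) * (c₃ + 2 * d₃ * t)) /
        ((c₂ + 2 * d₂ * t) *
          ((c₁ + 2 * d₁ * t) * (c₂ + 2 * d₂ * t) - (c₃ + 2 * d₃ * t) ^ 2)) -
      (d₂ * e₂ + d₃ * e₃) / (c₂ + 2 * d₂ * t))
    (hf₃ : f₃ = -(((d₃ * e₁ + d₂ * e₃) * (c₁ + 2 * d₁ * t) -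
          (d₁ * e₁ + d₃ * e₃) * (c₃ + 2 * d₃ * t)) /
        ((c₁ + 2 * d₁ * t) * (c₂ + 2 * d₂ * t) - (c₃ + 2 * d₃ * t) ^ 2)))
    (H₁ H₂ H₃ : V → V)
    (hH₁ : ∀ x, H₁ x = e₁ • x + f₁ • P x)
    (hH₂ : ∀ x, H₂ x = e₂ • x + f₂ • P x)
    (hH₃ : ∀ x, H₃ x = e₃ • x + f₃ • P x) :
    (∀ x, G₁ (H₁ x) + G₃ (H₃ x) = x) ∧
    (∀ x, G₁ (H₃ x) + G₃ (H₂ x) = 0) ∧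
    (∀ x, G₃ (H₁ x) + G₂ (H₃ x) = 0) ∧
    (∀ x, G₃ (H₃ x) + G₂ (H₂ x) = x) := by
  set A := !![c₁, c₃; c₃, c₂] with hA
  set D := !![d₁, d₃; d₃, d₂] with hD
  have hA_symm : A.IsSymm := by simp [hA, IsSymm.ext_iff]
  have hD_symm : D.IsSymm := by simp [hD, IsSymm.ext_iff]
  have hA_det : A.det ≠ 0 := by rwa [hA, det_fin_two_of, ← sq]
  have hE : A⁻¹ = !![e₁, e₃; e₃, e₂] := by rw [hA, inv_symm_fin_two, he₁, he₂, he₃]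
  have hDE : D * A⁻¹ = !![d₁ * e₁ + d₃ * e₃, d₁ * e₃ + d₃ * e₂;
      d₃ * e₁ + d₂ * e₃, d₃ * e₃ + d₂ * e₂] := by
    simp [hD, hE]
  have hF : (A + (2 * t) • D) * !![f₁, f₃; f₃, f₂] = -(D * A⁻¹) := by
    refine symm_fin_two_mul_eq_neg_mul_inv hA_symm hD_symm hA_det (by simp [hA, hD])
      hβ hc₂t ?_ ?_ ?_
    · rw [hf₁, hDE]
      simp only [of_apply, cons_val', cons_val_zero, cons_val_fin_one, cons_val_one]
      ring
    · rw [hf₃, hDE]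
      simp only [of_apply, cons_val', cons_val_zero, cons_val_fin_one, cons_val_one]
      ring
    · rw [hf₂, hf₃, hDE]
      simp only [of_apply, cons_val', cons_val_one, cons_val_fin_one]
      field_simp
      ring
  have hGH := naturalBlock_mul_eq_one hP (mul_nonsing_inv A hA_det.isUnit) hF
  rw [hE] at hGH
  have hGH_apply (i j : Fin 2) (x : V) := LinearMap.congr_fun (congrFun₂ hGH i j) x
  simp only [hA, hD, naturalBlock_apply, mul_apply, Fin.sum_univ_two, LinearMap.add_apply,
    Module.End.mul_apply, LinearMap.smul_apply, Module.End.one_apply] at hGH_apply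
  refine ⟨fun x => ?_, fun x => ?_, fun x => ?_, fun x => ?_⟩
  · simpa [hG₁, hG₃, hH₁, hH₃] using hGH_apply 0 0 x
  · simpa [hG₁, hG₃, hH₂, hH₃] using hGH_apply 0 1 x
  · simpa [hG₂, hG₃, hH₁, hH₃] using hGH_apply 1 0 x
  · simpa [hG₂, hG₃, hH₂, hH₃] using hGH_apply 1 1 x

/-- Fibrewise form of formulas (3.1) and (3.2): the block operator
`(H₁, H₃; H₃, H₂)` is the inverse of the block operator `(G₁, G₃; G₃, G₂)`. -/
theorem blocks_inverse_of_metric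
    {V : Type*} [NormedAddCommGroup V] [InnerProductSpace ℝ V]
    [FiniteDimensional ℝ V]
    (p : V) (t : ℝ) (ht : t = ‖p‖ ^ 2 / 2)
    (P : V → V) (hP : ∀ x, P x = ⟪p, x⟫ • p)
    (c₁ c₂ c₃ d₁ d₂ d₃ : ℝ)
    (hα : c₁ * c₂ - c₃ ^ 2 ≠ 0)
    (hβ : (c₁ + 2 * t * d₁) * (c₂ + 2 * t * d₂) - (c₃ + 2 * t * d₃) ^ 2 ≠ 0)
    (hc₂t : c₂ + 2 * t * d₂ ≠ 0)
    (G₁ G₂ G₃ : V → V)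
    (hG₁ : ∀ x, G₁ x = c₁ • x + d₁ • P x)
    (hG₂ : ∀ x, G₂ x = c₂ • x + d₂ • P x)
    (hG₃ : ∀ x, G₃ x = c₃ • x + d₃ • P x)
    (e₁ e₂ e₃ f₁ f₂ f₃ : ℝ)
    (he₁ : e₁ = c₂ / (c₁ * c₂ - c₃ ^ 2))
    (he₂ : e₂ = c₁ / (c₁ * c₂ - c₃ ^ 2))
    (he₃ : e₃ = -c₃ / (c₁ * c₂ - c₃ ^ 2))
    (hf₁ : f₁ = -((c₂ * d₁ * e₁ - c₃ * d₃ * e₁ - c₃ * d₂ * e₃ + c₂ * d₃ * e₃ +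
        2 * d₁ * d₂ * e₁ * t - 2 * d₃ ^ 2 * e₁ * t) /
      (c₁ * c₂ - c₃ ^ 2 + 2 * c₂ * d₁ * t + 2 * c₁ * d₂ * t - 4 * c₃ * d₃ * t +
        4 * d₁ * d₂ * t ^ 2 - 4 * d₃ ^ 2 * t ^ 2)))
    (hf₂ : f₂ = (c₃ + 2 * d₃ * t) *
        ((d₃ * e₁ + d₂ * e₃) * (c₁ + 2 * d₁ * t) -
          (d₁ * e₁ + d₃ * e₃) * (c₃ + 2 * d₃ * t)) /
        ((c₂ + 2 * d₂ * t) *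
          ((c₁ + 2 * d₁ * t) * (c₂ + 2 * d₂ * t) - (c₃ + 2 * d₃ * t) ^ 2)) -
      (d₂ * e₂ + d₃ * e₃) / (c₂ + 2 * d₂ * t))
    (hf₃ : f₃ = -(((d₃ * e₁ + d₂ * e₃) * (c₁ + 2 * d₁ * t) -
          (d₁ * e₁ + d₃ * e₃) * (c₃ + 2 * d₃ * t)) /
        ((c₁ + 2 * d₁ * t) * (c₂ + 2 * d₂ * t) - (c₃ + 2 * d₃ * t) ^ 2)))
    (H₁ H₂ H₃ : V → V)
    (hH₁ : ∀ x, H₁ x = e₁ • x + f₁ • P x)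
    (hH₂ : ∀ x, H₂ x = e₂ • x + f₂ • P x)
    (hH₃ : ∀ x, H₃ x = e₃ • x + f₃ • P x) :
    (∀ x, G₁ (H₁ x) + G₃ (H₃ x) = x) ∧
    (∀ x, G₁ (H₃ x) + G₃ (H₂ x) = 0) ∧
    (∀ x, G₃ (H₁ x) + G₂ (H₃ x) = 0) ∧
    (∀ x, G₃ (H₃ x) + G₂ (H₂ x) = x) := by
  obtain rfl : P = InnerProductSpace.rankOne ℝ p p := funext hP
  exact blocks_inverse_of_metric_general (InnerProductSpace.rankOne ℝ p p : Module.End ℝ V) t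
    (by rw [rankOne_self_mul_self, ht, mul_div_cancel₀ _ two_ne_zero]) c₁ c₂ c₃ d₁ d₂ d₃ hα hβ hc₂t
    G₁ G₂ G₃ hG₁ hG₂ hG₃ e₁ e₂ e₃ f₁ f₂ f₃ he₁ he₂ he₃ hf₁ hf₂ hf₃ H₁ H₂ H₃ hH₁ hH₂ hH₃
end
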